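/- Let A be a positive definite Hermitian n×n matrix (n ≥ 2) and let v ∈ ℂⁿ. Then ⟨A⁻¹v, v⟩·|v|² + |v|²·tr(A⁻¹) ≥ (1/(n-1))·(|v|²)^(1+1/n)·(det A)^(-1/n). -/

import Mathlib

open Matrix
open scoped ComplexOrder

theorem trace_amgm_aux (n : ℕ) (hn : 2 ≤ n) (M : Matrix (Fin n) (Fin n) ℂ) (hM : M.PosSemidef) :
    (M.det.re) ^ (1 / (n : ℝ)) * n ≤ M.trace.re := by
  have h1 : M.det.re = ∏ i, hM.1.eigenvalues i := by
    rw [hM.1.det_eq_prod_eigenvalues]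
    have : (∏ i, ((hM.1.eigenvalues i : ℝ) : ℂ)) = ((∏ i, hM.1.eigenvalues i : ℝ) : ℂ) := by
      push_cast; rfl
    exact (congrArg Complex.re this).trans (Complex.ofReal_re _)
  have h2 : M.trace.re = ∑ i, hM.1.eigenvalues i := by
    rw [hM.1.trace_eq_sum_eigenvalues]
    have : (∑ i, ((hM.1.eigenvalues i : ℝ) : ℂ)) = ((∑ i, hM.1.eigenvalues i : ℝ) : ℂ) := by
      push_cast; rfl
    exact (congrArg Complex.re this).trans (Complex.ofReal_re _)
  have hn0 : (0 : ℝ) < n := by positivity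
  have := Real.geom_mean_le_arith_mean Finset.univ (fun _ : Fin n => (1 : ℝ))
    hM.1.eigenvalues (fun _ _ => zero_le_one) (by simpa using hn0)
    (fun i _ => hM.eigenvalues_nonneg i)
  simp only [Real.rpow_one, one_mul, Finset.sum_const, Finset.card_univ, Fintype.card_fin,
    nsmul_eq_mul, mul_one] at this
  rw [h1, h2, one_div]
  exact (le_div_iff₀ hn0).1 this

/-- For a positive definite Hermitian `n × n` matrix `A` (`n ≥ 2`) and `v ∈ ℂⁿ`,
`⟨A⁻¹ v, v⟩ |v|² + |v|² tr(A⁻¹) ≥ (1/(n-1)) (|v|²)^(1+1/n) (det A)^(-1/n)`. -/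
theorem inner_inv_add_trace_inv_lower_bound (n : ℕ) (hn : 2 ≤ n)
    (A : Matrix (Fin n) (Fin n) ℂ) (hA : A.IsHermitian) (hApos : A.PosDef)
    (v : Fin n → ℂ) :
    (star v ⬝ᵥ (A⁻¹ *ᵥ v)).re * (∑ i, Complex.normSq (v i))
      + (∑ i, Complex.normSq (v i)) * ((A⁻¹.trace).re)
    ≥ (1 / (n - 1 : ℝ)) * ((∑ i, Complex.normSq (v i)) ^ ((1 : ℝ) + 1 / n))
        * ((A.det.re) ^ (-(1 / (n : ℝ)))) := by
  set s : ℝ := ∑ i, Complex.normSq (v i) with hs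
  have hs0 : 0 ≤ s := Finset.sum_nonneg fun i _ => Complex.normSq_nonneg _
  have hsv : star v ⬝ᵥ v = (s : ℂ) := by
    simp [dotProduct, hs, Complex.normSq_eq_conj_mul_self]
  obtain ⟨S, hS⟩ : ∃ S : Matrix (Fin n) (Fin n) ℂ, A⁻¹ = Sᴴ * S := by
    open scoped MatrixOrder in
    exact CStarAlgebra.nonneg_iff_eq_star_mul_self.1 hApos.inv.posSemidef.nonneg
  set C : Matrix (Fin n) (Fin n) ℂ := 1 + vecMulVec v (star v) with hC
  have hCp : C.PosSemidef := PosSemidef.one.add (posSemidef_vecMulVec_self_star v)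
  have hM : (S * C * Sᴴ).PosSemidef := hCp.mul_mul_conjTranspose_same S
  have hdC : C.det = 1 + (s : ℂ) := by
    rw [hC, vecMulVec_eq Unit, det_one_add_replicateCol_mul_replicateRow, hsv]
  have hdet0 : 0 < A.det := hApos.det_pos
  have hd0 : 0 < A.det.re := (Complex.pos_iff.1 hdet0).1
  have hdA : A.det = (A.det.re : ℂ) := by
    apply Complex.ext <;> simp [← (Complex.pos_iff.1 hdet0).2]
  have hdet : (S * C * Sᴴ).det = ((A.det.re⁻¹ * (1 + s) : ℝ) : ℂ) := by
    have : (S * C * Sᴴ).det = A⁻¹.det * C.det := by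
      rw [hS]; simp only [det_mul]; ring
    rw [this, hdC, det_nonsing_inv, Ring.inverse_eq_inv', hdA]
    push_cast; simp
  have htr : (S * C * Sᴴ).trace = star v ⬝ᵥ (A⁻¹ *ᵥ v) + A⁻¹.trace := by
    rw [trace_mul_comm, ← Matrix.mul_assoc, ← hS, hC, mul_add, trace_add, Matrix.mul_one,
      mul_vecMulVec, trace_vecMulVec, dotProduct_comm, add_comm]
  have key := trace_amgm_aux n hn _ hM
  rw [hdet, htr, Complex.ofReal_re, Complex.add_re] at key
  have hn0 : (2 : ℝ) ≤ n := by exact_mod_cast hn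
  rw [Real.mul_rpow (by positivity) (by positivity), Real.inv_rpow hd0.le,
    ← Real.rpow_neg hd0.le] at key
  rw [Real.rpow_add_of_nonneg hs0 zero_le_one (by positivity), Real.rpow_one]
  set d := A.det.re ^ (-(1 / (n : ℝ)))
  have hdp : 0 ≤ d := by positivity
  have h1 : s ^ (1 / (n : ℝ)) ≤ (1 + s) ^ (1 / (n : ℝ)) :=
    Real.rpow_le_rpow hs0 (by linarith) (by positivity)
  have h2 : 1 / ((n : ℝ) - 1) ≤ n := by
    rw [div_le_iff₀ (by linarith)]; nlinarith
  have h3 : d * s ^ (1 / (n : ℝ)) * (1 / ((n : ℝ) - 1)) ≤ d * (1 + s) ^ (1 / (n : ℝ)) * n := by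
    have : 0 ≤ 1 / ((n : ℝ) - 1) := one_div_nonneg.2 (by linarith)
    gcongr
  have h4 := mul_le_mul_of_nonneg_left (h3.trans key) hs0
  linarith
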